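/- arXiv:1505.04701 — 2 statements merged into one kernel-verified Lean document; each statement's English description precedes it below -/
import Mathlib

section
/- Let G be a countable amenable group, S a Følner sequence for G, and A, B ⊆ G. If d̄_S(A) ≥ α > 0 and BD(B) > 0, then the product set BA is upper S-syndetic of level α; that is, there exists a finite F ⊆ G such that for every finite L ⊆ G, the set {x ∈ G : Lx ⊆ FBA} has upper S-density at least α. -/
open Filter Pointwise
open scoped symmDiff Classical

variable {G : Type*}

/-- Upper density of `A` along the sequence of finite sets `S`. -/
noncomputable def upperDens (S : ℕ → Finset G) (A : Set G) : ℝ :=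
  limsup (fun n => (((S n).filter (· ∈ A)).card : ℝ) / ((S n).card : ℝ)) atTop

/-- Lower density of `A` along the sequence of finite sets `S`. -/
noncomputable def lowerDens (S : ℕ → Finset G) (A : Set G) : ℝ :=
  liminf (fun n => (((S n).filter (· ∈ A)).card : ℝ) / ((S n).card : ℝ)) atTop

/-- `S` is a (left) Følner sequence for `G`. -/
def IsFolner [Group G] (S : ℕ → Finset G) : Prop :=
  (∀ n, (S n).Nonempty) ∧
  ∀ x : G, Tendsto (fun n => (((x • S n) ∆ S n).card : ℝ) / ((S n).card : ℝ)) atTop (nhds 0)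

/-- (Left) Banach density: supremum of upper densities over all Følner sequences. -/
noncomputable def banachDens [Group G] (A : Set G) : ℝ :=
  sSup {d : ℝ | ∃ S : ℕ → Finset G, IsFolner S ∧ d = upperDens S A}

/-!
Let `m` be an invariant mean on `G` which is dominated by the upper density along `S` and agrees
with it at `A`. If all translates of `A` agree with `A` up to `m`-null sets, then `F = {1}` works,
as `B * A` contains a translate of `A`. Otherwise `m (t • A ∪ A) ≥ m A + 4 ε` for some `t` and
`ε > 0`. Choose `F` such that the mass of `F * B`, for a mean giving `B` positive mass, is nearly
maximal among the sets `K * B` with `K` finite; then averages along translates of `F * B` are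
nearly full. The points `x` with `L * x ⊈ F * B * A` lie in
`P = K * (F * B * A)ᶜ` for every `K ⊇ L⁻¹`, and `K` can be chosen such that `P` is almost invariant,
again by maximizing mass. The averaging property of `F * B` shows that `P` almost misses some
translate of `A`, hence by almost invariance it almost misses both `A` and `t • A`. Thus the
complement of `P` almost contains `t • A ∪ A`, and the gap of `4 ε` absorbs the errors.
-/

section Content

variable {X ι : Type*}

/-- A nonnegative finitely additive set function defined on all subsets of `X`. -/
structure IsContent (m : Set X → ℝ) : Prop where
  nonneg (s : Set X) : 0 ≤ m s
  union_of_disjoint {s t : Set X} : Disjoint s t → m (s ∪ t) = m s + m t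

namespace IsContent

variable {m : Set X → ℝ} (hm : IsContent m)
include hm

lemma empty : m ∅ = 0 := by
  simpa using hm.union_of_disjoint (Set.disjoint_empty ∅)

lemma inter_add_sdiff (s t : Set X) : m (s ∩ t) + m (s \ t) = m s := by
  rw [← hm.union_of_disjoint Set.disjoint_sdiff_inter.symm, Set.inter_union_sdiff]

lemma add_sdiff (s t : Set X) : m s + m (t \ s) = m (s ∪ t) := by
  rw [← hm.union_of_disjoint Set.disjoint_sdiff_right, Set.union_sdiff_self]

lemma mono {s t : Set X} (hst : s ⊆ t) : m s ≤ m t := by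
  rw [← Set.union_eq_self_of_subset_left hst, ← hm.add_sdiff]
  exact le_add_of_nonneg_right (hm.nonneg _)

lemma union_le (s t : Set X) : m (s ∪ t) ≤ m s + m t := by
  rw [← hm.add_sdiff]
  gcongr
  exact hm.mono Set.sdiff_subset

lemma nonempty_of_pos {s : Set X} (hs : 0 < m s) : s.Nonempty :=
  Set.nonempty_iff_ne_empty.2 fun h ↦ by simp [h, hm.empty] at hs

lemma sum_fiber (f : X → ι) (K : Finset ι) (s : Set X) :
    ∑ i ∈ K, m {x ∈ s | f x = i} = m {x ∈ s | f x ∈ K} := by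
  induction K using Finset.induction_on with
  | empty => simp [hm.empty]
  | insert i K hi ih =>
    rw [Finset.sum_insert hi, ih, ← hm.union_of_disjoint]
    · congr 1
      ext x
      simp only [Set.mem_union, Set.mem_ofPred_eq, Finset.mem_insert, ← and_or_left]
    · exact Set.disjoint_left.2 fun x hx hx' ↦ hi (hx.2 ▸ hx'.2)

lemma sum_mul_le {K : Finset ι} {w : ι → ℝ} {s : ι → Set X} {t : Set X} {M : ℝ}
    (hst : ∀ i ∈ K, s i ⊆ t) (hM : ∀ x ∈ t, ∑ i ∈ K with x ∈ s i, w i ≤ M) :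
    ∑ i ∈ K, w i * m (s i) ≤ M * m t := by
  let f : X → Finset ι := fun x ↦ {i ∈ K | x ∈ s i}
  have apply_eq (i) (hi : i ∈ K) :
      m (s i) = ∑ J ∈ K.powerset with i ∈ J, m {x ∈ t | f x = J} := by
    rw [hm.sum_fiber]
    congr 1
    grind
  have mul_fiber_le (J : Finset ι) :
      (∑ i ∈ J, w i) * m {x ∈ t | f x = J} ≤ M * m {x ∈ t | f x = J} := by
    obtain hJ | ⟨x, hx, rfl⟩ := {x ∈ t | f x = J}.eq_empty_or_nonempty
    · simp [hJ, hm.empty]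
    · exact mul_le_mul_of_nonneg_right (hM x hx) (hm.nonneg _)
  calc ∑ i ∈ K, w i * m (s i)
      = ∑ i ∈ K, ∑ J ∈ K.powerset with i ∈ J, w i * m {x ∈ t | f x = J} :=
        Finset.sum_congr rfl fun i hi ↦ by rw [apply_eq i hi, Finset.mul_sum]
    _ = ∑ J ∈ K.powerset, ∑ i ∈ J, w i * m {x ∈ t | f x = J} :=
        Finset.sum_comm' fun i J ↦ by grind
    _ ≤ ∑ J ∈ K.powerset, M * m {x ∈ t | f x = J} := by
        gcongr with J
        rw [← Finset.sum_mul]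
        exact mul_fiber_le J
    _ = M * m t := by
        rw [← Finset.mul_sum, hm.sum_fiber]
        congr 2
        grind

end IsContent

end Content

section InvariantMean

variable {X : Type*} [Group G] [MulAction G X]

variable (G) in
/-- A finitely additive probability measure on all subsets of `X` which is invariant under the
action of `G`. -/
structure IsInvariantMean (m : Set X → ℝ) : Prop extends IsContent m where
  univ : m Set.univ = 1
  smul (g : G) (s : Set X) : m (g • s) = m s

namespace IsInvariantMean

variable {m : Set X → ℝ} (hm : IsInvariantMean G m)
include hm

lemma le_one (s : Set X) : m s ≤ 1 :=
  hm.univ ▸ hm.mono s.subset_univ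

lemma le_biInter_smul {A : Set X} (hA : ∀ g : G, m (A \ g • A) = 0) (L : Finset G) :
    m A ≤ m (⋂ g ∈ L, g • A) := by
  suffices hnull : m (A \ ⋂ g ∈ L, g • A) = 0 by
    rw [← hm.inter_add_sdiff A (⋂ g ∈ L, g • A), hnull, add_zero]
    exact hm.mono Set.inter_subset_right
  refine le_antisymm ?_ (hm.nonneg _)
  induction L using Finset.induction_on with
  | empty => simp [hm.empty]
  | insert g L _ ih =>
    rw [Finset.set_biInter_insert, Set.sdiff_inter]
    linarith [hm.union_le (A \ g • A) (A \ ⋂ g ∈ L, g • A), hA g]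

lemma exists_superset_forall_smul_le (C : Set X) (L : Finset G) {ε : ℝ} (hε : 0 < ε) :
    ∃ K ⊇ L, ∀ F : Finset G, m ((F : Set G) • C) ≤ m ((K : Set G) • C) + ε := by
  have hbdd : BddAbove (Set.range fun F : Finset G ↦ m ((F : Set G) • C)) :=
    ⟨1, Set.forall_mem_range.2 fun F ↦ hm.le_one _⟩
  obtain ⟨K, hK⟩ := exists_lt_of_lt_ciSup (sub_lt_self (⨆ F : Finset G, m ((F : Set G) • C)) hε)
  refine ⟨K ∪ L, Finset.subset_union_right, fun F ↦ ?_⟩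
  have hmono : m ((K : Set G) • C) ≤ m (((K ∪ L : Finset G) : Set G) • C) :=
    hm.mono (Set.smul_subset_smul_right (by simp))
  linarith [le_ciSup hbdd F]

lemma exists_superset_forall_smul_sdiff_le (C : Set X) (L : Finset G) {ε : ℝ} (hε : 0 < ε) :
    ∃ K ⊇ L, ∀ g : G, m (g • (K : Set G) • C \ (K : Set G) • C) ≤ ε := by
  obtain ⟨K, hLK, hK⟩ := hm.exists_superset_forall_smul_le C L hε
  refine ⟨K, hLK, fun g ↦ ?_⟩
  have hunion := hK (K ∪ g • K)
  rw [Finset.coe_union, Finset.coe_smul_finset, Set.union_smul, smul_assoc, ← hm.add_sdiff]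
    at hunion
  linarith

lemma smul_inter_smul_le {P A : Set X} {ε δ : ℝ} {s : G} (hP : ∀ g : G, m (g • P \ P) ≤ ε)
    (hs : m (P ∩ s • A) ≤ δ) (t : G) : m (P ∩ t • A) ≤ δ + ε := by
  have hsub : (s * t⁻¹) • (P ∩ t • A) ⊆ (P ∩ s • A) ∪ ((s * t⁻¹) • P \ P) := by
    rw [Set.smul_set_inter, smul_smul, inv_mul_cancel_right]
    grind
  rw [← hm.smul (s * t⁻¹)]
  linarith [hm.mono hsub, hm.union_le (P ∩ s • A) ((s * t⁻¹) • P \ P), hP (s * t⁻¹)]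

lemma exists_forall_mul_smul_lt {B : Set X} (hB : 0 < m B) {r : ℝ} (hr : r < 1) :
    ∃ F : Finset G, ∀ K : Finset G, r * m ((K : Set G) • B) < m ((F : Set G) • B) := by
  obtain ⟨F, hF₁, hF⟩ :=
    hm.exists_superset_forall_smul_le B {1} (mul_pos (sub_pos.2 hr) hB)
  have hBF : m B ≤ m ((F : Set G) • B) :=
    hm.mono fun b hb ↦ ⟨1, hF₁ (Finset.mem_singleton_self 1), b, hb, one_smul G b⟩
  refine ⟨F, fun K ↦ ?_⟩
  obtain hr₀ | hr₀ := le_total r 0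
  · exact (mul_nonpos_of_nonpos_of_nonneg hr₀ (hm.nonneg _)).trans_lt (hB.trans_le hBF)
  · calc r * m ((K : Set G) • B)
        ≤ r * (m ((F : Set G) • B) + (1 - r) * m B) := mul_le_mul_of_nonneg_left (hF K) hr₀
      _ < m ((F : Set G) • B) := by nlinarith [mul_pos (sub_pos.2 hr) hB]

lemma exists_forall_exists_mul_sum_le {B : Set X} (hB : 0 < m B) {r : ℝ} (hr : r < 1) :
    ∃ F : Finset G, ∀ (K : Finset G) (w : G → ℝ), (∀ k ∈ K, 0 ≤ w k) →
      ∃ x : X, r * ∑ k ∈ K, w k ≤ ∑ k ∈ K with k • x ∈ (F : Set G) • B, w k := by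
  obtain ⟨F, hF⟩ := hm.exists_forall_mul_smul_lt hB hr
  refine ⟨F, fun K w hw ↦ ?_⟩
  by_contra! hlt
  set D := (F : Set G) • B
  set W := ∑ k ∈ K, w k
  set Y := ((K⁻¹ * F : Finset G) : Set G) • B
  have hsub (k) (hk : k ∈ K) : k⁻¹ • D ⊆ Y := by
    simp only [Y, Finset.coe_mul, mul_smul]
    exact Set.smul_set_subset_smul (by simpa using hk)
  have average_le : W * m D ≤ r * W * m Y := by
    simpa only [hm.smul, ← Finset.sum_mul] using hm.sum_mul_le hsub (w := w) fun x _ ↦ by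
      simpa only [Set.mem_inv_smul_set_iff] using (hlt x).le
  have hW : W = 0 := by
    refine le_antisymm ?_ (Finset.sum_nonneg hw)
    by_contra! hpos
    nlinarith [mul_lt_mul_of_pos_left (hF (K⁻¹ * F)) hpos]
  obtain ⟨b, -⟩ := hm.nonempty_of_pos hB
  have hb := hlt b
  rw [hW, mul_zero] at hb
  exact hb.not_ge (Finset.sum_nonneg fun k hk ↦ hw k (Finset.mem_filter.1 hk).1)

end IsInvariantMean

lemma IsContent.exists_forall_exists_inter_smul_le {m : Set X → ℝ} (hm : IsContent m)
    {μ : Set G → ℝ} (hμ : IsInvariantMean G μ) {B : Set G} (hB : 0 < μ B) (A : Set X)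
    {ε : ℝ} (hε : 0 < ε) :
    ∃ F : Finset G, ∀ K : Finset G, ∃ s : G,
      m ((K : Set G) • (((F : Set G) * B) • A)ᶜ ∩ s • A) ≤
        ε * m ((K : Set G) • (((F : Set G) * B) • A)ᶜ) := by
  obtain ⟨F, hF⟩ := hμ.exists_forall_exists_mul_sum_le hB (sub_lt_self 1 hε)
  refine ⟨F, fun K ↦ ?_⟩
  set D := (F : Set G) * B
  set P := (K : Set G) • (D • A)ᶜ
  have exists_mem_inv (x) (hx : x ∈ P) : ∃ k ∈ K⁻¹, k • x ∉ D • A := by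
    obtain ⟨k, hk, y, hy, rfl⟩ := hx
    exact ⟨k⁻¹, Finset.inv_mem_inv hk, by simpa using hy⟩
  -- Weighting `k` by the mass of the fiber of `γ` over `k` yields an `s` such that
  -- `γ x • s ∈ F • B` for most `x ∈ P`.
  choose! γ hγK hγ using exists_mem_inv
  obtain ⟨s, hs⟩ := hF K⁻¹ (fun k ↦ m {x ∈ P | γ x = k}) fun _ _ ↦ hm.nonneg _
  rw [hm.sum_fiber, hm.sum_fiber, Set.sep_eq_self_iff_mem_true.2 hγK] at hs
  have hsub : {x ∈ P | γ x ∈ K⁻¹.filter (· • s ∈ (F : Set G) • B)} ⊆ P \ s • A := by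
    rintro x ⟨hx, hγs⟩
    refine ⟨hx, ?_⟩
    rintro ⟨a, ha, rfl⟩
    exact hγ _ hx ⟨γ (s • a) * s, (Finset.mem_filter.1 hγs).2, a, ha, mul_smul _ _ _⟩
  exact ⟨s, by linarith [hm.mono hsub, hm.inter_add_sdiff P (s • A)]⟩

lemma compl_smul_compl_subset {K L : Finset G} (hLK : L⁻¹ ⊆ K) (T : Set X) :
    ((K : Set G) • Tᶜ)ᶜ ⊆ {x | ∀ g ∈ L, g • x ∈ T} := by
  intro x hx g hg
  by_contra hgx
  exact hx ⟨g⁻¹, hLK (Finset.inv_mem_inv hg), g • x, hgx, inv_smul_smul g x⟩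

namespace IsInvariantMean

variable {m : Set X → ℝ} (hm : IsInvariantMean G m)
include hm

lemma le_apply_of_forall_sdiff_smul_eq_zero {A : Set X} (hA : ∀ g : G, m (A \ g • A) = 0)
    (b : G) (L : Finset G) : m A ≤ m {x | ∀ g ∈ L, g • x ∈ b • A} := by
  refine (hm.le_biInter_smul hA (L.image (·⁻¹ * b))).trans (hm.mono fun x hx g hg ↦ ?_)
  rw [← Set.mem_inv_smul_set_iff, smul_smul]
  exact Set.mem_iInter₂.1 hx _ (Finset.mem_image_of_mem (·⁻¹ * b) hg)

theorem exists_finset_forall_le_apply {μ : Set G → ℝ} (hμ : IsInvariantMean G μ) {B : Set G}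
    (hB : 0 < μ B) (A : Set X) :
    ∃ F : Finset G, ∀ L : Finset G,
      m A ≤ m {x | ∀ g ∈ L, g • x ∈ ((F : Set G) * B) • A} := by
  by_cases hA : ∀ g : G, m (A \ g • A) = 0
  · obtain ⟨b, hb⟩ := hμ.nonempty_of_pos hB
    refine ⟨{1}, fun L ↦ (hm.le_apply_of_forall_sdiff_smul_eq_zero hA b L).trans (hm.mono ?_)⟩
    intro x hx g hg
    exact Set.smul_set_subset_smul (by simpa using hb) (hx g hg)
  push Not at hA
  obtain ⟨t, ht⟩ := hA
  set ε := m (A \ t • A) / 4 with hε_def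
  have hε : 0 < ε := by linarith [(hm.nonneg (A \ t • A)).lt_of_ne' ht]
  obtain ⟨F, hF⟩ := hm.toIsContent.exists_forall_exists_inter_smul_le hμ hB A hε
  refine ⟨F, fun L ↦ ?_⟩
  set T := ((F : Set G) * B) • A
  obtain ⟨K, hLK, hK⟩ := hm.exists_superset_forall_smul_sdiff_le Tᶜ L⁻¹ hε
  set P := (K : Set G) • Tᶜ
  obtain ⟨s, hs⟩ := hF K
  have hP (u : G) : m (P ∩ u • A) ≤ ε + ε :=
    hm.smul_inter_smul_le hK (hs.trans (mul_le_of_le_one_right hε.le (hm.le_one P))) u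
  have hPA : m (P ∩ A) ≤ ε + ε := by simpa only [one_smul] using hP 1
  have hunion : m (t • A ∪ A) = m A + 4 * ε := by
    rw [← hm.add_sdiff, hm.smul, hε_def, mul_div_cancel₀ _ four_ne_zero]
  have hsub : t • A ∪ A ⊆ Pᶜ ∪ ((P ∩ A) ∪ (P ∩ t • A)) := by grind
  linarith [hm.mono hsub, hm.union_le Pᶜ ((P ∩ A) ∪ (P ∩ t • A)),
    hm.union_le (P ∩ A) (P ∩ t • A), hP t, hm.mono (compl_smul_compl_subset hLK T)]

end IsInvariantMean

end InvariantMean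

section Density

open MeasureTheory

variable {X : Type*}

lemma isBoundedUnder_le_card_filter_div_card {ι : Type*} (l : Filter ι) (S : ι → Finset X)
    (A : Set X) :
    IsBoundedUnder (· ≤ ·) l fun i ↦ (((S i).filter (· ∈ A)).card : ℝ) / (S i).card :=
  isBoundedUnder_of ⟨1, fun _ ↦ div_le_one_of_le₀
    (Nat.cast_le.2 (Finset.card_filter_le _ _)) (Nat.cast_nonneg _)⟩

lemma mapClusterPt_upperDens (S : ℕ → Finset X) (A : Set X) :
    MapClusterPt (upperDens S A) atTop
      fun n ↦ (((S n).filter (· ∈ A)).card : ℝ) / (S n).card :=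
  MapClusterPt.limsup
    (isBoundedUnder_of ⟨0, fun _ ↦ by positivity⟩ : IsBoundedUnder (· ≥ ·) _ _).isCoboundedUnder_le
    (isBoundedUnder_le_card_filter_div_card atTop S A)

lemma exists_isFolner_upperDens_pos [Group G] {B : Set G} (hB : 0 < banachDens B) :
    ∃ T : ℕ → Finset G, IsFolner T ∧ 0 < upperDens T B := by
  by_contra! h
  refine hB.not_ge (Real.sSup_nonpos ?_)
  rintro _ ⟨T, hT, rfl⟩
  exact h T hT

variable [MeasurableSpace X]

lemma toReal_count_div_count [MeasurableSingletonClass X] (S T : Finset X) :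
    (Measure.count (T : Set X) / Measure.count (S : Set X)).toReal = (T.card : ℝ) / S.card := by
  rw [Measure.count_apply_finset, Measure.count_apply_finset, ENNReal.toReal_div,
    ENNReal.toReal_natCast, ENNReal.toReal_natCast]

lemma IsFolner.isFoelner [Group G] [MeasurableSpace G] [MeasurableSingletonClass G]
    {S : ℕ → Finset G} (hS : IsFolner S) :
    IsFoelner G Measure.count atTop fun n ↦ (S n : Set G) where
  eventually_measurableSet := .of_forall fun n ↦ (S n).measurableSet
  eventually_meas_ne_zero := by simp [(hS.1 _).ne_empty]
  eventually_meas_ne_top := by simp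
  tendsto_meas_smul_symmDiff g := by
    simp only [← Finset.coe_smul_finset, ← Finset.coe_symmDiff]
    refine (ENNReal.tendsto_toReal_iff (fun n ↦ ?_) ENNReal.zero_ne_top).1 ?_
    · exact ENNReal.div_ne_top (by simp) (by simp [(hS.1 n).ne_empty])
    · simpa only [toReal_count_div_count, ENNReal.toReal_zero] using hS.2 g

variable [Group G] [MulAction G X]

instance smulInvariantMeasure_count [DiscreteMeasurableSpace X] :
    SMulInvariantMeasure G X (Measure.count : Measure X) where
  measure_preimage_smul c s _ := by
    rw [Set.preimage_smul, ← Set.image_smul, Measure.count_injective_image (MulAction.injective _)]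

variable {ι : Type*} {μ : Measure X} {u : Ultrafilter ι} {F : ι → Set X}

lemma foelnerMean_ne_top (hF : IsFoelner G μ u F) (s : Set X) : IsFoelner.mean μ u F s ≠ ⊤ := by
  refine ne_top_of_le_ne_top ENNReal.one_ne_top ?_
  rw [← hF.mean_univ_eq_one]
  refine le_of_tendsto_of_tendsto' (hF.tendsto_nhds_mean s) (hF.tendsto_nhds_mean _) fun i ↦ ?_
  gcongr
  exact s.subset_univ

variable [DiscreteMeasurableSpace X]

lemma isInvariantMean_toReal_foelnerMean [SMulInvariantMeasure G X μ] (hF : IsFoelner G μ u F) :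
    IsInvariantMean G fun s ↦ (IsFoelner.mean μ u F s).toReal where
  nonneg _ := ENNReal.toReal_nonneg
  union_of_disjoint {s t} hst := by
    rw [hF.mean_union_eq_add_of_disjoint s t .of_discrete hst,
      ENNReal.toReal_add (foelnerMean_ne_top hF s) (foelnerMean_ne_top hF t)]
  univ := by rw [hF.mean_univ_eq_one, ENNReal.toReal_one]
  smul g s := by rw [hF.mean_smul_eq_mean]

lemma exists_isInvariantMean_apply_eq_upperDens {S : ℕ → Finset X}
    (hS : IsFoelner G Measure.count atTop fun n ↦ (S n : Set X)) (A : Set X) :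
    ∃ m : Set X → ℝ, IsInvariantMean G m ∧ m A = upperDens S A ∧ ∀ s, m s ≤ upperDens S s := by
  obtain ⟨u, hu, huA⟩ := mapClusterPt_iff_ultrafilter.1 (mapClusterPt_upperDens S A)
  have hSu := hS.mono hu
  have tendsto_mean (s : Set X) :
      Tendsto (fun n ↦ (((S n).filter (· ∈ s)).card : ℝ) / (S n).card) u
        (nhds (IsFoelner.mean Measure.count u (fun n ↦ (S n : Set X)) s).toReal) := by
    refine ((ENNReal.tendsto_toReal (foelnerMean_ne_top hSu s)).comp
      (hSu.tendsto_nhds_mean s)).congr fun n ↦ ?_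
    rw [Function.comp_apply, Set.inter_comm, ← toReal_count_div_count, Finset.coe_filter]
    rfl
  exact ⟨_, isInvariantMean_toReal_foelnerMean hSu, tendsto_nhds_unique (tendsto_mean A) huA,
    fun s ↦ MapClusterPt.le_limsup (mapClusterPt_iff_ultrafilter.2 ⟨u, hu, tendsto_mean s⟩)
      (isBoundedUnder_le_card_filter_div_card atTop S s)⟩

theorem stmt13_general {S : ℕ → Finset X}
    (hS : IsFoelner G Measure.count atTop fun n ↦ (S n : Set X)) (A : Set X) {B : Set G}
    (hB : 0 < banachDens B) :
    ∃ F : Finset G, ∀ L : Finset G,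
      upperDens S A ≤ upperDens S {x | ∀ g ∈ L, g • x ∈ ((F : Set G) * B) • A} := by
  let _ : MeasurableSpace G := ⊤
  obtain ⟨T, hT, hTB⟩ := exists_isFolner_upperDens_pos hB
  obtain ⟨μ, hμ, hμB, -⟩ := exists_isInvariantMean_apply_eq_upperDens hT.isFoelner B
  obtain ⟨m, hm, hmA, hmS⟩ := exists_isInvariantMean_apply_eq_upperDens hS A
  obtain ⟨F, hF⟩ := hm.exists_finset_forall_le_apply hμ (hTB.trans_eq hμB.symm) A
  exact ⟨F, fun L ↦ hmA.ge.trans ((hF L).trans (hmS _))⟩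

end Density

theorem stmt13 [Group G] [Countable G] (S : ℕ → Finset G) (hS : IsFolner S)
    (A B : Set G) (α : ℝ) (hα : 0 < α) (hA : α ≤ upperDens S A)
    (hB : 0 < banachDens B) :
    ∃ F : Finset G, ∀ L : Finset G,
      α ≤ upperDens S {x : G | ∀ g ∈ L, g * x ∈ (F : Set G) * B * A} := by
  let _ : MeasurableSpace G := ⊤
  exact (stmt13_general hS.isFoelner A hB).imp fun F hF L ↦ hA.trans (hF L)
end

section
/- Let G be a countable amenable group, S a Følner sequence for G, and A, B ⊆ G. If the lower S-density of A is at least α > 0 and BD(B) > 0, then for every ε > 0, BA is lower S-syndetic of level α − ε: there exists a finite F ⊆ G such that for every finite L ⊆ G, the set {x ∈ G : Lx ⊆ FBA} has lower S-density at least α − ε. -/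
open Filter Pointwise
open scoped symmDiff Classical

variable {G : Type*}

/-!
Write `d_K(A) = |K ∩ A| / |K|`. For a fixed finite `K`, the mean of `d_{Ky}(A)` over `y ∈ S_n` is
the mean of `d_{k S_n}(A)` over `k ∈ K`, so by the Følner property it agrees with `d_{S_n}(A)` up
to `o(1)`. This averaging is used twice.

* Some finite `K` has `d_{Ky}(B) < (1 + ε) BD(B)` for all `y`. Since `d_{Ky}(B) = 0` unless
  `y ∈ K⁻¹B`, averaging gives `BD(B) ≤ (1 + ε) BD(B) BD(K⁻¹B)`, so `F = K⁻¹` has `BD(FB) ≥ 1 - ε`.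
* Let `D = FB` and let `K` be almost invariant under `L` with `d_K(D)` close to `BD(D)`. If
  `gx ∉ DA` for some `g ∈ L`, then `gk ∉ D` whenever `k ∈ K` and `k⁻¹x ∈ A`, so `d_{K⁻¹x}(A)` is at
  most about `1 - BD(D) ≤ ε`. Averaging shows that such `x` cost `A` at most `ε` of its density.
-/

section RelDens

open scoped BigOperators

variable {α β : Type*}

/-- The proportion of the points of the finite set `s` that lie in `A`, with value `0` when `s` is
empty. The densities of `A` along `S` are the limits superior and inferior of `relDens (S n) A`. -/
noncomputable def relDens (s : Finset α) (A : Set α) : ℝ :=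
  ((s.filter (· ∈ A)).card : ℝ) / (s.card : ℝ)

theorem relDens_nonneg (s : Finset α) (A : Set α) : 0 ≤ relDens s A := by
  unfold relDens
  positivity

theorem relDens_add_relDens_le_one (s : Finset α) {A B : Set α} (h : Disjoint A B) :
    relDens s A + relDens s B ≤ 1 := by
  have hdisj : Disjoint (s.filter (· ∈ A)) (s.filter (· ∈ B)) :=
    Finset.disjoint_filter.2 fun _ _ hA hB => Set.disjoint_left.1 h hA hB
  have hcard : (s.filter (· ∈ A)).card + (s.filter (· ∈ B)).card ≤ s.card := by
    rw [← Finset.card_union_of_disjoint hdisj]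
    exact Finset.card_le_card
      (Finset.union_subset (Finset.filter_subset _ _) (Finset.filter_subset _ _))
  rw [relDens, relDens, ← add_div]
  exact div_le_one_of_le₀ (mod_cast hcard) (Nat.cast_nonneg _)

theorem relDens_le_one (s : Finset α) (A : Set α) : relDens s A ≤ 1 :=
  (le_add_of_nonneg_right (relDens_nonneg s Aᶜ)).trans
    (relDens_add_relDens_le_one s disjoint_compl_right)

theorem relDens_eq_zero {s : Finset α} {A : Set α} (h : Disjoint (s : Set α) A) :
    relDens s A = 0 := by
  have hempty : s.filter (· ∈ A) = ∅ :=
    Finset.filter_eq_empty_iff.2 fun _ hx => Set.disjoint_left.1 h hx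
  rw [relDens, hempty, Finset.card_empty, Nat.cast_zero, zero_div]

theorem relDens_image {f : α → β} (hf : f.Injective) (s : Finset α) (A : Set β) :
    relDens (s.image f) A = relDens s (f ⁻¹' A) := by
  simp only [relDens, Finset.filter_image, Finset.card_image_of_injective _ hf, Set.mem_preimage]

theorem relDens_eq_expect (s : Finset α) (A : Set α) :
    relDens s A = 𝔼 x ∈ s, A.indicator (1 : α → ℝ) x := by
  simp only [relDens, Finset.expect_eq_sum_div_card, Set.indicator_apply, Pi.one_apply,
    Finset.sum_boole]

theorem expect_le_mul_relDens_add {s : Finset α} (hs : s.Nonempty) {f : α → ℝ} {C : Set α}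
    {M m : ℝ} (hmem : ∀ x ∈ C, f x ≤ M + m) (hnotMem : ∀ x ∉ C, f x ≤ m) :
    𝔼 x ∈ s, f x ≤ M * relDens s C + m := by
  calc 𝔼 x ∈ s, f x
      ≤ 𝔼 x ∈ s, (M * C.indicator (1 : α → ℝ) x + m) := by
        refine Finset.expect_le_expect fun x _ => ?_
        by_cases hx : x ∈ C
        · simpa [hx] using hmem x hx
        · simpa [hx] using hnotMem x hx
    _ = M * relDens s C + m := by
        rw [Finset.expect_add_distrib, ← Finset.mul_expect, Finset.expect_const hs,
          relDens_eq_expect]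

end RelDens

section TranslationDefect

variable {M α : Type*} [Group M] [MulAction M α]

/-- The proportion `|xs ∆ s| / |s|` measuring how far the finite set `s` is from being invariant
under `x`. A Følner sequence is one along which it tends to `0` for every `x`. -/
noncomputable def translationDefect (x : M) (s : Finset α) : ℝ :=
  (((x • s) ∆ s).card : ℝ) / (s.card : ℝ)

theorem relDens_le_relDens_smul_add (x : M) (s : Finset α) (A : Set α) :
    relDens s A ≤ relDens (x • s) A + translationDefect x s := by
  have hsub : s.filter (· ∈ A) ⊆ (x • s).filter (· ∈ A) ∪ (x • s) ∆ s := by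
    intro y hy
    simp only [Finset.mem_union, Finset.mem_filter, Finset.mem_symmDiff] at hy ⊢
    tauto
  have hcard := (Finset.card_le_card hsub).trans (Finset.card_union_le _ _)
  rw [relDens, relDens, translationDefect, Finset.card_smul_finset, ← add_div]
  gcongr
  exact_mod_cast hcard

end TranslationDefect

section Averaging

open scoped BigOperators RightActions

variable [Group G]

theorem expect_relDens_op_smul (s K : Finset G) (A : Set G) :
    𝔼 y ∈ s, relDens (K <• y) A = 𝔼 k ∈ K, relDens (k • s) A := by
  have hright (y : G) : relDens (K <• y) A = 𝔼 k ∈ K, A.indicator (1 : G → ℝ) (k * y) := by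
    rw [relDens_eq_expect]
    exact Finset.expect_image (mul_left_injective y).injOn
  have hleft (k : G) : relDens (k • s) A = 𝔼 y ∈ s, A.indicator (1 : G → ℝ) (k * y) := by
    rw [relDens_eq_expect]
    exact Finset.expect_image (mul_right_injective k).injOn
  simp only [hright, hleft]
  exact Finset.expect_comm ..

theorem relDens_le_expect_relDens_op_smul_add (s : Finset G) {K : Finset G} (hK : K.Nonempty)
    (A : Set G) :
    relDens s A ≤ 𝔼 y ∈ s, relDens (K <• y) A + 𝔼 k ∈ K, translationDefect k s := by
  calc relDens s A = 𝔼 _k ∈ K, relDens s A := (Finset.expect_const hK _).symm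
    _ ≤ 𝔼 k ∈ K, (relDens (k • s) A + translationDefect k s) :=
        Finset.expect_le_expect fun k _ => relDens_le_relDens_smul_add k s A
    _ = 𝔼 y ∈ s, relDens (K <• y) A + 𝔼 k ∈ K, translationDefect k s := by
        rw [Finset.expect_add_distrib, expect_relDens_op_smul]

theorem relDens_op_smul_eq_zero {K : Finset G} {B : Set G} {y : G} (hy : y ∉ (K : Set G)⁻¹ * B) :
    relDens (K <• y) B = 0 := by
  refine relDens_eq_zero (Set.disjoint_left.2 fun z hz hB => hy ?_)
  obtain ⟨k, hk, rfl⟩ := Finset.mem_smul_finset.1 hz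
  exact ⟨k⁻¹, Set.inv_mem_inv.2 hk, k * y, hB, inv_mul_cancel_left k y⟩

-- If `k⁻¹x ∈ A` and `gk ∈ D`, then `gx = (gk)(k⁻¹x) ∈ DA`.
theorem relDens_inv_op_smul_add_relDens_smul_le_one (K : Finset G) {A D : Set G} {g x : G}
    (hgx : g * x ∉ D * A) : relDens (K⁻¹ <• x) A + relDens (g • K) D ≤ 1 := by
  have hright : relDens (K⁻¹ <• x) A = relDens K {k | k⁻¹ * x ∈ A} :=
    (relDens_image (mul_left_injective x) K⁻¹ A).trans (relDens_image inv_injective K _)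
  have hleft : relDens (g • K) D = relDens K {k | g * k ∈ D} :=
    relDens_image (mul_right_injective g) K D
  rw [hright, hleft]
  refine relDens_add_relDens_le_one K (Set.disjoint_left.2 fun k hA hD => hgx ?_)
  exact ⟨g * k, hD, k⁻¹ * x, hA, by group⟩

end Averaging

section Density

theorem isBoundedUnder_le_relDens (S : ℕ → Finset G) (A : Set G) :
    IsBoundedUnder (· ≤ ·) atTop fun n => relDens (S n) A :=
  isBoundedUnder_of ⟨1, fun n => relDens_le_one (S n) A⟩

theorem isBoundedUnder_ge_relDens (S : ℕ → Finset G) (A : Set G) :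
    IsBoundedUnder (· ≥ ·) atTop fun n => relDens (S n) A :=
  isBoundedUnder_of ⟨0, fun n => relDens_nonneg (S n) A⟩

theorem upperDens_le_one (S : ℕ → Finset G) (A : Set G) : upperDens S A ≤ 1 :=
  limsup_le_of_le (isBoundedUnder_ge_relDens S A).isCoboundedUnder_le
    (.of_forall fun n => relDens_le_one (S n) A)

theorem lowerDens_le_add_of_eventually_le {S : ℕ → Finset G} {A C : Set G} {c : ℝ}
    (h : ∀ᶠ n in atTop, relDens (S n) A ≤ relDens (S n) C + c) :
    lowerDens S A ≤ lowerDens S C + c := by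
  have hbdd : IsBoundedUnder (· ≤ ·) atTop fun n => relDens (S n) C + c :=
    isBoundedUnder_of ⟨1 + c, fun n => add_le_add_left (relDens_le_one (S n) C) c⟩
  calc lowerDens S A ≤ liminf (fun n => relDens (S n) C + c) atTop :=
        liminf_le_liminf h (isBoundedUnder_ge_relDens S A) hbdd.isCoboundedUnder_ge
    _ = lowerDens S C + c :=
        liminf_add_const _ _ c (isBoundedUnder_le_relDens S C).isCoboundedUnder_ge
          (isBoundedUnder_ge_relDens S C)

end Density

section BanachDensity

variable [Group G]

theorem IsFolner.tendsto_translationDefect {S : ℕ → Finset G} (hS : IsFolner S) (x : G) :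
    Tendsto (fun n => translationDefect x (S n)) atTop (nhds 0) :=
  hS.2 x

theorem exists_isFolner_of_banachDens_pos {B : Set G} (hB : 0 < banachDens B) :
    ∃ S : ℕ → Finset G, IsFolner S := by
  by_contra! hS
  simp [banachDens, hS] at hB

theorem exists_isFolner_frequently_lt_relDens {S : ℕ → Finset G} (hS : IsFolner S) {B : Set G}
    {c : ℝ} (hc : c < banachDens B) :
    ∃ T : ℕ → Finset G, IsFolner T ∧ ∃ᶠ n in atTop, c < relDens (T n) B := by
  have hne : {d : ℝ | ∃ T : ℕ → Finset G, IsFolner T ∧ d = upperDens T B}.Nonempty :=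
    ⟨_, S, hS, rfl⟩
  obtain ⟨_, ⟨T, hT, rfl⟩, hcT⟩ := exists_lt_of_lt_csSup hne hc
  exact ⟨T, hT, frequently_lt_of_lt_limsup
    (isBoundedUnder_ge_relDens T B).isCoboundedUnder_le hcT⟩

theorem exists_finset_lt_relDens_and_translationDefect_lt {S : ℕ → Finset G} (hS : IsFolner S)
    {D : Set G} {c : ℝ} (hc : c < banachDens D) (L : Finset G) {δ : ℝ} (hδ : 0 < δ) :
    ∃ K : Finset G, K.Nonempty ∧ c < relDens K D ∧ ∀ g ∈ L, translationDefect g K < δ := by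
  obtain ⟨T, hT, hTD⟩ := exists_isFolner_frequently_lt_relDens hS hc
  have hinv : ∀ᶠ n in atTop, ∀ g ∈ L, translationDefect g (T n) < δ :=
    (eventually_all_finset L).2 fun g _ => (hT.tendsto_translationDefect g).eventually_lt_const hδ
  obtain ⟨n, hnD, hnL⟩ := (hTD.and_eventually hinv).exists
  exact ⟨T n, hT.1 n, hnD, hnL⟩

end BanachDensity

namespace IsFolner

open scoped BigOperators RightActions

variable [Group G] {S : ℕ → Finset G}

theorem op_smul (hS : IsFolner S) (x : ℕ → G) : IsFolner fun n => S n <• x n := by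
  refine ⟨fun n => (hS.1 n).smul_finset, fun g => ?_⟩
  simpa only [smul_comm g, ← Finset.smul_finset_symmDiff, Finset.card_smul_finset] using hS.2 g

theorem upperDens_le_banachDens (hS : IsFolner S) (A : Set G) : upperDens S A ≤ banachDens A :=
  le_csSup ⟨1, by rintro _ ⟨T, _, rfl⟩; exact upperDens_le_one T A⟩ ⟨S, hS, rfl⟩

theorem eventually_relDens_lt (hS : IsFolner S) {A : Set G} {c : ℝ} (hc : banachDens A < c) :
    ∀ᶠ n in atTop, relDens (S n) A < c :=
  eventually_lt_of_limsup_lt ((hS.upperDens_le_banachDens A).trans_lt hc)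
    (isBoundedUnder_le_relDens S A)

-- Otherwise bad right translates of the members of `S` would form a Følner sequence along which
-- the density of `B` is at least `c`.
theorem exists_finset_forall_relDens_op_smul_lt (hS : IsFolner S) {B : Set G} {c : ℝ}
    (hc : banachDens B < c) :
    ∃ K : Finset G, K.Nonempty ∧ ∀ y : G, relDens (K <• y) B < c := by
  by_contra! hbad
  choose x hx using fun n => hbad (S n) (hS.1 n)
  obtain ⟨n, hn⟩ := ((hS.op_smul x).eventually_relDens_lt hc).exists
  exact (hx n).not_gt hn

theorem tendsto_expect_translationDefect (hS : IsFolner S) (K : Finset G) :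
    Tendsto (fun n => 𝔼 k ∈ K, translationDefect k (S n)) atTop (nhds 0) := by
  simpa only [Finset.expect_eq_sum_div_card, Finset.sum_const_zero, zero_div] using
    (tendsto_finsetSum K fun k _ => hS.tendsto_translationDefect k).div_const (K.card : ℝ)

theorem eventually_relDens_le_mul_add (hS : IsFolner S) {K : Finset G} (hK : K.Nonempty)
    {A C : Set G} {M m : ℝ} (hmem : ∀ y ∈ C, relDens (K <• y) A ≤ M + m)
    (hnotMem : ∀ y ∉ C, relDens (K <• y) A ≤ m) {η : ℝ} (hη : 0 < η) :
    ∀ᶠ n in atTop, relDens (S n) A ≤ M * relDens (S n) C + m + η := by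
  filter_upwards [(hS.tendsto_expect_translationDefect K).eventually_le_const hη] with n hn
  exact (relDens_le_expect_relDens_op_smul_add (S n) hK A).trans
    (add_le_add (expect_le_mul_relDens_add (hS.1 n) hmem hnotMem) hn)

theorem banachDens_le_mul (hS : IsFolner S) {K : Finset G} (hK : K.Nonempty) {B : Set G} {M : ℝ}
    (hM : ∀ y : G, relDens (K <• y) B ≤ M) :
    banachDens B ≤ M * banachDens ((K : Set G)⁻¹ * B) := by
  have hM₀ : 0 ≤ M := (relDens_nonneg _ B).trans (hM 1)
  refine le_of_forall_pos_le_add fun ε hε => ?_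
  obtain ⟨η, hη, hηε⟩ : ∃ η, 0 < η ∧ (M + 2) * η = ε :=
    ⟨ε / (M + 2), by positivity, by field_simp⟩
  obtain ⟨T, hT, hTB⟩ := exists_isFolner_frequently_lt_relDens hS (sub_lt_self (banachDens B) hη)
  have hle := hT.eventually_relDens_le_mul_add hK (C := (K : Set G)⁻¹ * B)
    (fun y _ => (hM y).trans_eq (add_zero M).symm) (fun y hy => (relDens_op_smul_eq_zero hy).le) hη
  have hlt := hT.eventually_relDens_lt (lt_add_of_pos_right (banachDens ((K : Set G)⁻¹ * B)) hη)
  obtain ⟨n, hnB, hnle, hnlt⟩ := (hTB.and_eventually (hle.and hlt)).exists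
  linarith [mul_le_mul_of_nonneg_left hnlt.le hM₀]

theorem lowerDens_add_banachDens_le (hS : IsFolner S) (A D : Set G) (L : Finset G) :
    lowerDens S A + banachDens D ≤ lowerDens S {x | ∀ g ∈ L, g * x ∈ D * A} + 1 := by
  refine le_of_forall_pos_le_add fun ε hε => ?_
  obtain ⟨δ, hδ, hδε⟩ : ∃ δ, 0 < δ ∧ 3 * δ = ε := ⟨ε / 3, by positivity, by ring⟩
  obtain ⟨K, hK, hKD, hKL⟩ :=
    exists_finset_lt_relDens_and_translationDefect_lt hS (sub_lt_self (banachDens D) hδ) L hδ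
  have hsmall : ∀ x ∉ {x | ∀ g ∈ L, g * x ∈ D * A},
      relDens (K⁻¹ <• x) A ≤ 1 - relDens K D + δ := by
    intro x hx
    obtain ⟨g, hg, hgx⟩ : ∃ g ∈ L, g * x ∉ D * A := by simpa using hx
    linarith [relDens_inv_op_smul_add_relDens_smul_le_one K hgx,
      relDens_le_relDens_smul_add g K D, hKL g hg]
  have hle := lowerDens_le_add_of_eventually_le <|
    (hS.eventually_relDens_le_mul_add hK.inv (M := 1)
      (fun x _ => by linarith [relDens_le_one (K⁻¹ <• x) A, relDens_le_one K D])
      hsmall hδ).mono fun n hn => by rwa [one_mul, add_assoc] at hn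
  linarith

end IsFolner

theorem exists_finset_one_sub_le_banachDens_mul [Group G] {B : Set G} (hB : 0 < banachDens B)
    {ε : ℝ} (hε : 0 < ε) : ∃ F : Finset G, 1 - ε ≤ banachDens ((F : Set G) * B) := by
  obtain ⟨S, hS⟩ := exists_isFolner_of_banachDens_pos hB
  obtain ⟨K, hK, hKB⟩ := hS.exists_finset_forall_relDens_op_smul_lt
    (lt_mul_of_one_lt_left hB (lt_add_of_pos_right 1 hε))
  have hle : 1 ≤ (1 + ε) * banachDens ((K : Set G)⁻¹ * B) :=
    le_of_mul_le_mul_left (by linarith [hS.banachDens_le_mul hK fun y => (hKB y).le]) hB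
  have hε' : (1 + ε) * (1 - ε) ≤ 1 := by linarith [mul_pos hε hε]
  refine ⟨K⁻¹, ?_⟩
  rw [Finset.coe_inv]
  exact le_of_mul_le_mul_left (hε'.trans hle) (by positivity)

theorem stmt14_general [Group G] {B : Set G} (hB : 0 < banachDens B) {ε : ℝ} (hε : 0 < ε) :
    ∃ F : Finset G, ∀ S : ℕ → Finset G, IsFolner S → ∀ (A : Set G) (L : Finset G),
      lowerDens S A - ε ≤ lowerDens S {x : G | ∀ g ∈ L, g * x ∈ (F : Set G) * B * A} := by
  obtain ⟨F, hF⟩ := exists_finset_one_sub_le_banachDens_mul hB hε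
  exact ⟨F, fun S hS A L => by linarith [hS.lowerDens_add_banachDens_le A ((F : Set G) * B) L]⟩

theorem stmt14 [Group G] [Countable G] (S : ℕ → Finset G) (hS : IsFolner S)
    (A B : Set G) (α : ℝ) (hα : 0 < α) (hA : α ≤ lowerDens S A)
    (hB : 0 < banachDens B) (ε : ℝ) (hε : 0 < ε) :
    ∃ F : Finset G, ∀ L : Finset G,
      α - ε ≤ lowerDens S {x : G | ∀ g ∈ L, g * x ∈ (F : Set G) * B * A} := by
  obtain ⟨F, hF⟩ := stmt14_general hB hε
  exact ⟨F, fun L => (sub_le_sub_right hA ε).trans (hF S hS A L)⟩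
end
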